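/- arXiv:math/0304495 — 2 statements merged into one kernel-verified Lean document; each statement's English description precedes it below -/
import Mathlib

section
/- For every finite group G there exists an assignment to each commutative ring R of a commutative ring structure on the set W_G(R) of all functions from the set of conjugacy classes of subgroups of G to R, such that: (a) for every ring homomorphism h : R → R', the map W_G(h) : W_G(R) → W_G(R') given by x ↦ h ∘ x is a ring homomorphism, and (b) for every subgroup U ≤ G and every commutative ring R, the ghost map φ_U : W_G(R) → R, φ_U(x) = Σ'_{U ⪯ V ≤ G} |(G/V)^U| · x_V^{(V:U)}, is a ring homomorphism. -/
open MulAction Pointwise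
open scoped Classical

/-- The set of conjugacy classes of subgroups of `G`: the quotient of the set of
subgroups of `G` by the conjugation action of `G`. -/
abbrev SubgroupConjClasses (G : Type*) [Group G] :=
  MulAction.orbitRel.Quotient (ConjAct G) (Subgroup G)

/-- `U` is subconjugate to `V`: `U ≤ gVg⁻¹` for some `g ∈ G`. -/
def Subconj {G : Type*} [Group G] (U V : Subgroup G) : Prop :=
  ∃ g : ConjAct G, U ≤ g • V

/-- The ghost map `φ_U : W_G(R) → R`,
`φ_U(x) = Σ'_{U ⪯ V ≤ G} |(G/V)^U| · x_V^{(V:U)}`, with exactly one summand for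
each conjugacy class of subgroups `V` of `G` to which `U` is subconjugate. -/
noncomputable def ghost {G : Type*} [Group G] [Fintype G] {R : Type*} [CommRing R]
    (U : Subgroup G) (x : SubgroupConjClasses G → R) : R :=
  ∑ᶠ C : SubgroupConjClasses G,
    if Subconj U (Quotient.out C) then
      (Nat.card (MulAction.fixedPoints U (G ⧸ (Quotient.out C : Subgroup G))) : R) *
        x C ^ (Nat.card (Quotient.out C : Subgroup G) / Nat.card U)
    else 0

/-- The underlying set of the ring of `G`-Witt vectors with coefficients in `R`:
functions from the set of conjugacy classes of subgroups of `G` to `R`. -/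
def WittVec (G : Type u) [Group G] (R : Type v) : Type (max u v) :=
  SubgroupConjClasses G → R

/-! The families of ghost components of Witt vectors over a polynomial ring `ℤ[σ]` are exactly the
conjugation invariant families `a` for which `b V = a V (X ^ |V|)` satisfies the Burnside
congruences `∑ n ∈ N(U), b (U ⊔ ⟨n⟩) ≡ 0 mod |N(U)|`. They are necessary because, modulo `|N(U)|`,
every polynomial is a sum of monomials, and for such a sum the `V`-component counts, with weights,
the `V`-fixed points of a finite `G`-set, so that Burnside's lemma applies. They are sufficient
because the Witt coordinates can be found from the largest subgroups downwards: the congruence at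
`U` provides the divisibility by `|N(U) : U|` needed to solve for the coordinate at `U`.

These families form a ring: by naturality it is enough to multiply the ghost components of two
generic Witt vectors, whose coordinates are variables, and fixed points of products of `G`-sets are
products of fixed points. Over a ring `R`, the Witt vectors are the quotient of the ring of ghost
families over `ℤ[R]` obtained by evaluating Witt coordinates at the elements of `R`, so the ring
axioms hold automatically.
-/

section Burnside

variable {N Y A : Type*} [Group N] [Fintype N] [MulAction N Y] [Fintype Y] [CommSemiring A]

lemma card_dvd_sum_fixedBy (w : Y → A) (hw : ∀ (n : N) y, w (n • y) = w y) :
    (Nat.card N : A) ∣ ∑ n : N, ∑ y with y ∈ fixedBy Y n, w y := by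
  obtain ⟨W, rfl⟩ : ∃ W : orbitRel.Quotient N Y → A, w = W ∘ Quotient.mk _ :=
    ⟨Quotient.lift w (by rintro _ y ⟨n, rfl⟩; exact hw n y), rfl⟩
  refine Dvd.intro (∑ ω, W ω) ?_
  calc (Nat.card N : A) * ∑ ω, W ω
      = ∑ p : orbitRel.Quotient N Y × N, W p.1 := by
        simp [Fintype.sum_prod_type, Finset.mul_sum]
    _ = ∑ p : Σ n : N, fixedBy Y n, W (Quotient.mk _ p.2.1) :=
        (Fintype.sum_equiv (sigmaFixedByEquivOrbitsProdGroup N Y) _ _ fun _ => rfl).symm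
    _ = ∑ n : N, ∑ y with y ∈ fixedBy Y n, W (Quotient.mk _ y) := by
        rw [Fintype.sum_sigma]
        exact Finset.sum_congr rfl fun n _ =>
          (Finset.sum_subtype _ (fun _ => Finset.mem_filter_univ _) (W ∘ Quotient.mk _)).symm

end Burnside

section FixedPoints

variable {G Y : Type*} [Group G] [MulAction G Y]

lemma fixedPoints_zpowers (g : G) : fixedPoints (Subgroup.zpowers g) Y = fixedBy Y g := by
  ext y
  simp only [mem_fixedPoints, Subtype.forall, Subgroup.mk_smul, mem_fixedBy]
  exact Subgroup.zpowers_le (H := stabilizer G y)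

lemma mem_fixedPoints_prod {M Y Z : Type*} [Monoid M] [MulAction M Y] [MulAction M Z] {p : Y × Z} :
    p ∈ fixedPoints M (Y × Z) ↔ p.1 ∈ fixedPoints M Y ∧ p.2 ∈ fixedPoints M Z := by
  simp [mem_fixedPoints, Prod.ext_iff, forall_and]

lemma smul_mem_fixedPoints_conj_smul {g : ConjAct G} {U : Subgroup G} {y : Y} :
    ConjAct.ofConjAct g • y ∈ fixedPoints (g • U : Subgroup G) Y ↔ y ∈ fixedPoints U Y := by
  simp only [mem_fixedPoints, Subtype.forall, Subgroup.mk_smul]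
  constructor
  · intro h u hu
    simpa [ConjAct.smul_def, mul_smul] using h _ (Subgroup.smul_mem_pointwise_smul u g U hu)
  · rintro h _ ⟨u, hu, rfl⟩
    simpa [ConjAct.smul_def, mul_smul] using h u hu

lemma card_fixedPoints_conj_smul (g : ConjAct G) (U : Subgroup G) :
    Nat.card (fixedPoints (g • U : Subgroup G) Y) = Nat.card (fixedPoints U Y) :=
  (Nat.card_congr <| (MulAction.toPerm (ConjAct.ofConjAct g)).subtypeEquiv fun _ =>
    smul_mem_fixedPoints_conj_smul.symm).symm

lemma toConjAct_smul_eq_self_of_mem_normalizer {n : G} {U : Subgroup G}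
    (hn : n ∈ Subgroup.normalizer (U : Set G)) : ConjAct.toConjAct n • U = U := by
  ext x
  rw [Subgroup.mem_pointwise_smul_iff_inv_smul_mem, ← ConjAct.toConjAct_inv,
    ConjAct.toConjAct_smul, inv_inv]
  exact (Subgroup.mem_normalizer_iff''.1 hn x).symm

lemma smul_mem_fixedPoints_of_mem_normalizer {n : G} {U : Subgroup G}
    (hn : n ∈ Subgroup.normalizer (U : Set G)) {y : Y} :
    n • y ∈ fixedPoints U Y ↔ y ∈ fixedPoints U Y := by
  have h := smul_mem_fixedPoints_conj_smul (g := ConjAct.toConjAct n) (U := U) (y := y)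
  rwa [toConjAct_smul_eq_self_of_mem_normalizer hn] at h

end FixedPoints

section BurnsideCongruences

variable (G A : Type*) [Group G] [Fintype G] [CommSemiring A]

/-- The functions on subgroups of `G` that satisfy the Burnside congruences, which characterise
(for `A = ℤ`, up to conjugation invariance) the functions `V ↦ |Y^V|` of virtual `G`-sets `Y`. -/
def burnsideCongruences : Submodule A (Subgroup G → A) where
  carrier := {b | ∀ U : Subgroup G, (Nat.card (Subgroup.normalizer (U : Set G)) : A) ∣
    ∑ n : Subgroup.normalizer (U : Set G), b (U ⊔ Subgroup.zpowers (n : G))}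
  zero_mem' U := by simp
  add_mem' hb hc U := by
    simpa only [Pi.add_apply, Finset.sum_add_distrib] using dvd_add (hb U) (hc U)
  smul_mem' c b hb U := by
    simpa only [Pi.smul_apply, smul_eq_mul, ← Finset.mul_sum] using (hb U).mul_left c

variable {G A}

lemma sum_fixedPoints_mem_burnsideCongruences {Y : Type*} [MulAction G Y] [Fintype Y]
    (w : Y → A) (hw : ∀ (g : G) y, w (g • y) = w y) :
    (fun V : Subgroup G => ∑ y with y ∈ fixedPoints V Y, w y) ∈ burnsideCongruences G A := by
  intro U
  have h := card_dvd_sum_fixedBy (N := Subgroup.normalizer (U : Set G))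
    (fun y => if y ∈ fixedPoints U Y then w y else 0) fun n y => by
      simp only [Subgroup.smul_def, smul_mem_fixedPoints_of_mem_normalizer n.2, hw]
  simp only [fixedPoints_subgroup_sup, fixedPoints_zpowers, Set.inter_comm (fixedPoints U Y)]
  simp only [← Finset.sum_filter, Finset.filter_filter] at h
  exact h

lemma card_fixedPoints_mem_burnsideCongruences (A Y : Type*) [CommSemiring A] [MulAction G Y]
    [Finite Y] :
    (fun V : Subgroup G => (Nat.card (fixedPoints V Y) : A)) ∈ burnsideCongruences G A := by
  have := Fintype.ofFinite Y
  simpa [Nat.card_eq_fintype_card, Fintype.card_subtype] using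
    sum_fixedPoints_mem_burnsideCongruences (G := G) (Y := Y) (fun _ => (1 : A)) fun _ _ => rfl

end BurnsideCongruences

section Arrow

attribute [local instance] arrowAction

lemma fixedPoints_arrow (V X K : Type*) [Group V] [MulAction V X] :
    fixedPoints V (X → K) = Set.range fun F : orbitRel.Quotient V X → K => F ∘ Quotient.mk _ := by
  ext f
  constructor
  · intro hf
    refine ⟨Quotient.lift f ?_, rfl⟩
    rintro _ x ⟨v, rfl⟩
    exact (congrFun (hf v) (v • x)).symm.trans (congrArg f (inv_smul_smul v x))
  · rintro ⟨F, rfl⟩ v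
    funext x
    exact congrArg F (Quotient.sound ⟨v⁻¹, rfl⟩)

variable {V X K A : Type*} [Group V] [MulAction V X] [Fintype X] [CommSemiring A]

lemma sum_fixedPoints_arrow_prod [Fintype K] (k : X → K → A) :
    ∑ f with f ∈ fixedPoints V (X → K), ∏ x, k x (f x) =
      ∏ ω : orbitRel.Quotient V X, ∑ c, ∏ x with Quotient.mk _ x = ω, k x c := by
  let orbitMap : X → orbitRel.Quotient V X := Quotient.mk _
  calc ∑ f with f ∈ fixedPoints V (X → K), ∏ x, k x (f x)
      = ∑ F : orbitRel.Quotient V X → K, ∏ x, k x (F (orbitMap x)) := by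
        refine (Finset.sum_nbij (fun F => F ∘ orbitMap) ?_ ?_ ?_ fun _ _ => rfl).symm
        · simp [fixedPoints_arrow, orbitMap]
        · exact Quotient.mk_surjective.injective_comp_right.injOn
        · intro f hf
          simpa [fixedPoints_arrow] using hf
    _ = ∑ F : orbitRel.Quotient V X → K, ∏ ω, ∏ x with orbitMap x = ω, k x (F ω) := by
        refine Finset.sum_congr rfl fun F _ => ?_
        rw [← Finset.prod_fiberwise Finset.univ orbitMap]
        refine Finset.prod_congr rfl fun ω _ => Finset.prod_congr rfl fun x hx => ?_
        rw [(Finset.mem_filter.1 hx).2]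
    _ = ∏ ω : orbitRel.Quotient V X, ∑ c, ∏ x with orbitMap x = ω, k x c := by
        rw [Finset.prod_univ_sum, Fintype.piFinset_univ]

variable [IsCancelSMul V X]

lemma card_filter_mk_eq (ω : orbitRel.Quotient V X) :
    Finset.card {x : X | Quotient.mk _ x = ω} = Nat.card V := by
  obtain ⟨x₀, rfl⟩ := Quotient.exists_rep ω
  have hinj : Function.Injective fun v : V => v • x₀ := fun v w => IsCancelSMul.right_cancel v w x₀
  rw [← Nat.card_range_of_injective hinj, ← Fintype.card_subtype, ← Nat.card_eq_fintype_card]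
  exact Nat.card_congr (Equiv.subtypeEquivRight fun x => Quotient.eq)

lemma card_filter_mk_mem (T : Set (orbitRel.Quotient V X)) :
    Finset.card {x : X | Quotient.mk _ x ∈ T} = Finset.card {ω | ω ∈ T} * Nat.card V := by
  rw [Finset.card_eq_sum_card_fiberwise (f := Quotient.mk _)
    (t := {ω : orbitRel.Quotient V X | ω ∈ T}) (by intro x; simp)]
  refine Finset.sum_const_nat fun ω hω => ?_
  rw [← card_filter_mk_eq ω, Finset.filter_filter]
  congr! with x
  exact and_iff_right_of_imp (by rintro rfl; simpa using hω)

/-- The weight of a colour `c : Option I` at `x`, chosen such that a colouring has product weight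
`0` unless it is `none` exactly off `S`, and then its weight is the product of the `m i` over the
colours `i` used on `S`. -/
noncomputable def supportWeight {I : Type*} (S : Set X) (m : I → A) (x : X) (c : Option I) : A :=
  if x ∈ S then c.elim 0 m else c.elim 1 0

lemma sum_fixedPoints_prod_supportWeight {I : Type*} [Fintype I] [Finite V] (S : Set X)
    (hS : ∀ (v : V) x, v • x ∈ S ↔ x ∈ S) (m : I → A) :
    ∑ f with f ∈ fixedPoints V (X → Option I), ∏ x, supportWeight S m x (f x) =
      (∑ i, m i ^ Nat.card V) ^ (Nat.card S / Nat.card V) := by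
  obtain ⟨T, rfl⟩ : ∃ T : Set (orbitRel.Quotient V X), S = Quotient.mk _ ⁻¹' T :=
    ⟨{ω | ω.lift (· ∈ S) (by rintro _ x ⟨v, rfl⟩; exact propext (hS v x))}, rfl⟩
  have sum_orbit (ω : orbitRel.Quotient V X) :
      ∑ c, ∏ x with Quotient.mk _ x = ω, supportWeight (Quotient.mk _ ⁻¹' T) m x c =
        if ω ∈ T then ∑ i, m i ^ Nat.card V else 1 := by
    have prod_orbit (c : Option I) :
        ∏ x with Quotient.mk _ x = ω, supportWeight (Quotient.mk _ ⁻¹' T) m x c =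
          (if ω ∈ T then c.elim 0 m else c.elim 1 0) ^ Nat.card V := by
      rw [← card_filter_mk_eq ω]
      refine Finset.prod_eq_pow_card fun x hx => ?_
      simp only [Finset.mem_filter_univ] at hx
      simp only [supportWeight, Set.mem_preimage, hx]
    have hV : Nat.card V ≠ 0 := Nat.card_pos.ne'
    simp only [prod_orbit, Fintype.sum_option]
    split_ifs <;> simp [hV]
  have hcard : Nat.card (Quotient.mk _ ⁻¹' T : Set X) / Nat.card V = Finset.card {ω | ω ∈ T} := by
    rw [Nat.card_eq_fintype_card, ← Set.toFinset_card]
    refine Nat.div_eq_of_eq_mul_left Nat.card_pos ?_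
    rw [← card_filter_mk_mem]
    congr 1
    ext
    simp
  rw [sum_fixedPoints_arrow_prod, Finset.prod_congr rfl fun ω _ => sum_orbit ω, hcard,
    ← Finset.prod_filter, Finset.prod_const]

end Arrow

section NormCongruence

variable {G A : Type*} [Group G] [CommSemiring A]

lemma card_fiber_quotientGroup_mk (W : Subgroup G) (s : G ⧸ W) :
    Nat.card {t : G | (t : G ⧸ W) = s} = Nat.card W := by
  obtain ⟨g, rfl⟩ := QuotientGroup.mk_surjective s
  rw [QuotientGroup.eq_class_eq_leftCoset]
  exact Nat.card_congr (Subgroup.leftCosetEquivSubgroup g)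

variable [Fintype G]

attribute [local instance] arrowAction in
/-- The family is the weighted count of the `V`-fixed pairs of a coset `s : G ⧸ W` and a colouring
of `G` by `I` supported on `s`. -/
lemma card_fixedPoints_mul_sum_pow_mem_burnsideCongruences {I : Type*} [Fintype I]
    (W : Subgroup G) (m : I → A) :
    (fun V : Subgroup G => (Nat.card (fixedPoints V (G ⧸ W)) : A) *
      (∑ i, m i ^ Nat.card V) ^ (Nat.card W / Nat.card V)) ∈ burnsideCongruences G A := by
  let fiber (s : G ⧸ W) : Set G := {t | (t : G ⧸ W) = s}
  have smul_mem_fiber (g t : G) (s : G ⧸ W) : g * t ∈ fiber (g • s) ↔ t ∈ fiber s :=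
    smul_left_cancel_iff (x := (t : G ⧸ W)) g
  have smul_apply_mul (g t : G) (f : G → Option I) : (g • f) (g * t) = f t :=
    congrArg f (inv_smul_smul g t)
  have h := sum_fixedPoints_mem_burnsideCongruences (G := G) (Y := (G ⧸ W) × (G → Option I))
    (fun y => ∏ t, supportWeight (fiber y.1) m t (y.2 t)) fun g y =>
      (Fintype.prod_equiv (Equiv.mulLeft g) _ _ fun t => by
        simp [supportWeight, smul_mem_fiber, smul_apply_mul]).symm
  convert h using 2 with V
  have sum_colourings (s : G ⧸ W) (hs : s ∈ fixedPoints V (G ⧸ W)) :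
      ∑ f with f ∈ fixedPoints V (G → Option I), ∏ t, supportWeight (fiber s) m t (f t) =
        (∑ i, m i ^ Nat.card V) ^ (Nat.card W / Nat.card V) := by
    rw [← card_fiber_quotientGroup_mk W s]
    refine sum_fixedPoints_prod_supportWeight (fiber s) (fun v t => ?_) m
    have hv := smul_mem_fiber v t s
    rwa [show (v : G) • s = s from hs v] at hv
  have filter_prod : ({y | y ∈ fixedPoints V ((G ⧸ W) × (G → Option I))} : Finset _) =
      ({s | s ∈ fixedPoints V (G ⧸ W)} : Finset _) ×ˢ
        ({f | f ∈ fixedPoints V (G → Option I)} : Finset _) := by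
    ext y
    simp only [Finset.mem_product, Finset.mem_filter_univ]
    exact mem_fixedPoints_prod (M := V)
  rw [filter_prod, Finset.sum_product,
    Finset.sum_congr rfl fun s hs => sum_colourings s (by simpa using hs), Finset.sum_const,
    nsmul_eq_mul, ← Fintype.card_subtype, ← Nat.card_eq_fintype_card]

end NormCongruence

section Expand

open MvPolynomial

variable {σ : Type*}

lemma exists_dvd_sub_sum_monomial {n : ℕ} (hn : 0 < n) (x : MvPolynomial σ ℤ) :
    ∃ (k : ℕ) (m : Fin k → σ →₀ ℕ),
      (n : MvPolynomial σ ℤ) ∣ x - ∑ i, monomial (m i) 1 := by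
  induction x using MvPolynomial.induction_on' with
  | monomial u a =>
    refine ⟨(a % n).toNat, fun _ => u, monomial u (a / n), ?_⟩
    have hcast : ((a % n).toNat : ℤ) = a % n := Int.toNat_of_nonneg (a.emod_nonneg (by lia))
    have hsum : ∑ _i : Fin (a % n).toNat, monomial u (1 : ℤ) = monomial u (a % n) := by
      rw [Fin.sum_const, ← map_nsmul, nsmul_one, hcast]
    rw [hsum, ← map_sub, ← C_eq_coe_nat, C_mul_monomial]
    congr 1
    linarith [Int.mul_ediv_add_emod a n]
  | add p q hp hq =>
    obtain ⟨k, m, h⟩ := hp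
    obtain ⟨l, m', h'⟩ := hq
    refine ⟨k + l, Fin.append m m', ?_⟩
    simpa [Fin.sum_univ_add, add_sub_add_comm] using dvd_add h h'

lemma natCast_dvd_of_dvd_expand {n p : ℕ} (hp : p ≠ 0) {f : MvPolynomial σ ℤ}
    (h : (n : MvPolynomial σ ℤ) ∣ expand p f) : (n : MvPolynomial σ ℤ) ∣ f := by
  rw [← C_eq_coe_nat, C_dvd_iff_dvd_coeff] at h ⊢
  exact fun i => coeff_expand_smul p hp f i ▸ h (p • i)

lemma card_fixedPoints_mul_expand_pow_mem_burnsideCongruences {G : Type*} [Group G] [Fintype G]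
    (W : Subgroup G) (x : MvPolynomial σ ℤ) :
    (fun V : Subgroup G => (Nat.card (fixedPoints V (G ⧸ W)) : MvPolynomial σ ℤ) *
      expand (Nat.card V) x ^ (Nat.card W / Nat.card V)) ∈
        burnsideCongruences G (MvPolynomial σ ℤ) := by
  intro U
  obtain ⟨k, m, hm⟩ := exists_dvd_sub_sum_monomial
    (Nat.card_pos (α := Subgroup.normalizer (U : Set G))) x
  have expand_sum (V : Subgroup G) : expand (Nat.card V) (∑ i, monomial (m i) (1 : ℤ)) =
      ∑ i, monomial (m i) 1 ^ Nat.card V := by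
    simp [expand_monomial, monomial_pow]
  refine (dvd_iff_dvd_of_dvd_sub ?_).2
    (card_fixedPoints_mul_sum_pow_mem_burnsideCongruences W (fun i => monomial (m i) 1) U)
  rw [← Finset.sum_sub_distrib]
  refine Finset.dvd_sum fun g _ => ?_
  simp only [← expand_sum, ← mul_sub]
  refine Dvd.dvd.mul_left (dvd_trans ?_ (sub_dvd_pow_sub_pow _ _ _)) _
  simpa using map_dvd (expand (Nat.card ↥(U ⊔ Subgroup.zpowers (g : G)))) hm

end Expand

section Marks

variable {G : Type*} [Group G]

/-- The subgroup `Quotient.out C` representing the class `C` in the definition of `ghost`. -/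
noncomputable abbrev classRep (C : SubgroupConjClasses G) : Subgroup G := Quotient.out C

/-- The table of marks of `G`: the number of `U`-fixed points of the transitive `G`-set with
stabilisers in the class `C`. -/
noncomputable def mark (U : Subgroup G) (C : SubgroupConjClasses G) : ℕ :=
  Nat.card (fixedPoints U (G ⧸ classRep C))

lemma card_conj_smul (g : ConjAct G) (U : Subgroup G) :
    Nat.card (g • U : Subgroup G) = Nat.card U :=
  (Nat.card_congr (Subgroup.equivSMul g U).toEquiv).symm

lemma exists_conj_smul_classRep_eq (U : Subgroup G) :
    ∃ g : ConjAct G, g • classRep (Quotient.mk _ U : SubgroupConjClasses G) = U :=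
  orbitRel_apply.1 (Quotient.exact (Quotient.out_eq (Quotient.mk _ U)).symm)

lemma subconj_of_mem_fixedPoints {U V : Subgroup G} {s : G ⧸ V} (hs : s ∈ fixedPoints U (G ⧸ V)) :
    Subconj U V := by
  obtain ⟨t, rfl⟩ := QuotientGroup.mk_surjective s
  refine ⟨ConjAct.toConjAct t, fun u hu => ?_⟩
  rw [Subgroup.mem_pointwise_smul_iff_inv_smul_mem, ConjAct.smul_def]
  have h : (t : G ⧸ V) = (u * t : G) := (hs ⟨u, hu⟩).symm
  simpa [mul_assoc] using QuotientGroup.eq.1 h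

lemma subconj_of_mark_ne_zero {U : Subgroup G} {C : SubgroupConjClasses G} (h : mark U C ≠ 0) :
    Subconj U (classRep C) :=
  have ⟨_, hs⟩ := (Nat.card_ne_zero.1 h).1
  subconj_of_mem_fixedPoints hs

lemma card_dvd_of_subconj {U V : Subgroup G} (h : Subconj U V) : Nat.card U ∣ Nat.card V :=
  have ⟨g, hg⟩ := h
  card_conj_smul g V ▸ Subgroup.card_dvd_of_le hg

lemma mark_conj_smul (g : ConjAct G) (U : Subgroup G) (C : SubgroupConjClasses G) :
    mark (g • U) C = mark U C :=
  card_fixedPoints_conj_smul g U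

variable [Finite G]

lemma card_lt_card_of_lt {U V : Subgroup G} (h : U < V) : Nat.card U < Nat.card V :=
  lt_of_not_ge fun hc => h.ne (Subgroup.eq_of_le_of_card_ge h.le hc)

lemma mk_eq_of_subconj_classRep {U : Subgroup G} {C : SubgroupConjClasses G}
    (h : Subconj U (classRep C)) (hc : Nat.card (classRep C) ≤ Nat.card U) :
    Quotient.mk _ U = C := by
  obtain ⟨g, hg⟩ := h
  have hU : U = g • classRep C :=
    Subgroup.eq_of_le_of_card_ge hg ((card_conj_smul g _).trans_le hc)
  rw [← Quotient.out_eq C]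
  exact Quotient.sound ⟨g, hU.symm⟩

lemma mark_classRep_mul_card (C : SubgroupConjClasses G) :
    mark (classRep C) C * Nat.card (classRep C) =
      Nat.card (Subgroup.normalizer (classRep C : Set G)) := by
  rw [mark, Nat.card_congr (Sylow.fixedPointsMulLeftCosetsEquivQuotient _),
    Subgroup.card_eq_card_quotient_mul_card_subgroup
      ((classRep C).subgroupOf (Subgroup.normalizer (classRep C : Set G))),
    Nat.card_congr (Subgroup.subgroupOfEquivOfLe Subgroup.le_normalizer).toEquiv]
  rfl

lemma mark_classRep_ne_zero (C : SubgroupConjClasses G) : mark (classRep C) C ≠ 0 :=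
  left_ne_zero_of_mul ((mark_classRep_mul_card C).trans_ne Nat.card_pos.ne')

end Marks

section DivisibilityByMarks

variable {G A : Type*} [Group G] [Fintype G] [CommRing A] {b : Subgroup G → A}

lemma card_normalizer_dvd_card_mul (hb : b ∈ burnsideCongruences G A) {U : Subgroup G}
    (hU : ∀ V, U < V → b V = 0) :
    (Nat.card (Subgroup.normalizer (U : Set G)) : A) ∣ Nat.card U * b U := by
  have term (n : Subgroup.normalizer (U : Set G)) :
      b (U ⊔ Subgroup.zpowers (n : G)) = if n ∈ U.subgroupOf _ then b U else 0 := by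
    split_ifs with hn
    · rw [sup_eq_left.2 (Subgroup.zpowers_le.2 (Subgroup.mem_subgroupOf.1 hn))]
    · exact hU _ (left_lt_sup.2 fun h => hn (Subgroup.mem_subgroupOf.2 (Subgroup.zpowers_le.1 h)))
  have hsum : ∑ n : Subgroup.normalizer (U : Set G), b (U ⊔ Subgroup.zpowers (n : G)) =
      Nat.card U * b U := by
    rw [← Nat.card_congr (Subgroup.subgroupOfEquivOfLe (Subgroup.le_normalizer (H := U))).toEquiv,
      Nat.card_eq_fintype_card, Fintype.card_subtype, ← nsmul_eq_mul, ← Finset.sum_const,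
      Finset.sum_filter]
    exact Finset.sum_congr rfl fun n _ => term n
  exact hsum ▸ hb U

lemma mark_dvd_of_mem_burnsideCongruences [IsDomain A] [CharZero A]
    (hb : b ∈ burnsideCongruences G A) {C : SubgroupConjClasses G}
    (hC : ∀ V, classRep C < V → b V = 0) : (mark (classRep C) C : A) ∣ b (classRep C) := by
  have h := card_normalizer_dvd_card_mul hb hC
  rw [← mark_classRep_mul_card, mul_comm (mark _ _), Nat.cast_mul] at h
  exact (mul_dvd_mul_iff_left (Nat.cast_ne_zero.2 Nat.card_pos.ne')).1 h

end DivisibilityByMarks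

section Ghost

variable {G R : Type*} [Group G] [Fintype G] [CommRing R]

lemma ghost_eq_sum_mark (U : Subgroup G) (x : SubgroupConjClasses G → R) :
    ghost U x = ∑ C, (mark U C : R) * x C ^ (Nat.card (classRep C) / Nat.card U) := by
  rw [ghost, finsum_eq_sum_of_fintype]
  refine Finset.sum_congr rfl fun C _ => ?_
  split_ifs with h
  · rfl
  · rw [not_ne_iff.1 (mt subconj_of_mark_ne_zero h), Nat.cast_zero, zero_mul]

lemma ghost_conj_smul (g : ConjAct G) (U : Subgroup G) (x : SubgroupConjClasses G → R) :
    ghost (g • U) x = ghost U x := by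
  simp only [ghost_eq_sum_mark, mark_conj_smul, card_conj_smul]

lemma ghost_comp {R' : Type*} [CommRing R'] (h : R →+* R') (U : Subgroup G)
    (x : SubgroupConjClasses G → R) : ghost U (h ∘ x) = h (ghost U x) := by
  simp [ghost_eq_sum_mark]

lemma ghost_congr {U : Subgroup G} {x y : SubgroupConjClasses G → R}
    (h : ∀ C, Nat.card U ≤ Nat.card (classRep C) → x C = y C) : ghost U x = ghost U y := by
  simp only [ghost_eq_sum_mark]
  refine Finset.sum_congr rfl fun C _ => ?_
  by_cases hm : mark U C = 0
  · simp [hm]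
  · rw [h C (Nat.le_of_dvd Nat.card_pos (card_dvd_of_subconj (subconj_of_mark_ne_zero hm)))]

lemma ghost_classRep_sub_ghost {C : SubgroupConjClasses G} {x y : SubgroupConjClasses G → R}
    (h : ∀ D, Nat.card (classRep C) < Nat.card (classRep D) → x D = y D) :
    ghost (classRep C) x - ghost (classRep C) y = mark (classRep C) C * (x C - y C) := by
  simp only [ghost_eq_sum_mark]
  rw [← Finset.sum_sub_distrib, Fintype.sum_eq_single C]
  · rw [Nat.div_self Nat.card_pos, pow_one, pow_one, mul_sub]
  · intro D hD
    by_cases hm : mark (classRep C) D = 0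
    · simp [hm]
    · rw [h D, sub_self]
      by_contra! hle
      exact hD (mk_eq_of_subconj_classRep (subconj_of_mark_ne_zero hm) hle ▸ Quotient.out_eq C)

variable (G R) in
/-- The total ghost map, sending a Witt vector to the family of all its ghost components. -/
noncomputable def ghostMap (x : SubgroupConjClasses G → R) (U : Subgroup G) : R :=
  ghost U x

lemma ghostMap_injective [IsDomain R] [CharZero R] : Function.Injective (ghostMap G R) := by
  intro x y hxy
  by_contra hne
  obtain ⟨D, hD⟩ := Function.ne_iff.1 hne
  obtain ⟨C, hC, hmax⟩ := Finset.exists_max_image {C | x C ≠ y C}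
    (fun C => Nat.card (classRep C)) ⟨D, by simpa using hD⟩
  have hdiff := ghost_classRep_sub_ghost (C := C) (x := x) (y := y) fun D hD => by
    by_contra hne
    exact (hmax D (by simpa using hne)).not_gt hD
  rw [show ghost _ x = ghost _ y from congrFun hxy _, sub_self, eq_comm, mul_eq_zero,
    Nat.cast_eq_zero, sub_eq_zero] at hdiff
  exact hdiff.elim (mark_classRep_ne_zero C) (by simpa using hC)

end Ghost

section GhostCongruences

open MvPolynomial

variable {G σ : Type*} [Group G] [Fintype G]

variable (G σ) in
/-- The families over `ℤ[σ]` cut out by the congruences between ghost components: conjugation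
invariance and, after the substitution `X ↦ X ^ |V|` in the component at `V`, the Burnside
congruences. -/
noncomputable def ghostCongruences : AddSubgroup (Subgroup G → MvPolynomial σ ℤ) where
  carrier := {a | (∀ (g : ConjAct G) U, a (g • U) = a U) ∧
    (fun V : Subgroup G => expand (Nat.card V) (a V)) ∈ burnsideCongruences G (MvPolynomial σ ℤ)}
  zero_mem' := ⟨fun _ _ => rfl, by
    simp only [Pi.zero_apply, map_zero]
    exact zero_mem (burnsideCongruences G _)⟩
  add_mem' ha hb := ⟨fun g U => congrArg₂ (· + ·) (ha.1 g U) (hb.1 g U), by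
    simp only [Pi.add_apply, map_add]
    exact add_mem ha.2 hb.2⟩
  neg_mem' ha := ⟨fun g U => congrArg Neg.neg (ha.1 g U), by
    simp only [Pi.neg_apply, map_neg]
    exact neg_mem ha.2⟩

lemma ghostMap_mem_ghostCongruences (x : SubgroupConjClasses G → MvPolynomial σ ℤ) :
    ghostMap G _ x ∈ ghostCongruences G σ := by
  refine ⟨fun g U => ghost_conj_smul g U x, ?_⟩
  have hsum := sum_mem fun C (_ : C ∈ Finset.univ) =>
    card_fixedPoints_mul_expand_pow_mem_burnsideCongruences (classRep C) (x C)
  convert hsum using 1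
  funext V
  simp only [ghostMap, ghost_eq_sum_mark, mark, map_sum, map_mul, map_pow, map_natCast,
    Finset.sum_apply]

lemma mark_dvd_of_mem_ghostCongruences {a : Subgroup G → MvPolynomial σ ℤ}
    (ha : a ∈ ghostCongruences G σ) {C : SubgroupConjClasses G}
    (hC : ∀ V, classRep C < V → a V = 0) :
    (mark (classRep C) C : MvPolynomial σ ℤ) ∣ a (classRep C) :=
  natCast_dvd_of_dvd_expand Nat.card_pos.ne' <|
    mark_dvd_of_mem_burnsideCongruences ha.2 fun V hV => by simp [hC V hV]

lemma exists_ghost_eq_of_le_card {a : Subgroup G → MvPolynomial σ ℤ}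
    (ha : a ∈ ghostCongruences G σ) {n : ℕ} {x : SubgroupConjClasses G → MvPolynomial σ ℤ}
    (hx : ∀ U : Subgroup G, n + 1 ≤ Nat.card U → ghost U x = a U) :
    ∃ y : SubgroupConjClasses G → MvPolynomial σ ℤ,
      ∀ U : Subgroup G, n ≤ Nat.card U → ghost U y = a U := by
  have exists_coeff (C : SubgroupConjClasses G) : ∃ c, Nat.card (classRep C) = n →
      a (classRep C) - ghost (classRep C) x = mark (classRep C) C * c := by
    by_cases hC : Nat.card (classRep C) = n
    · obtain ⟨c, hc⟩ := mark_dvd_of_mem_ghostCongruences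
        (sub_mem ha (ghostMap_mem_ghostCongruences x)) fun V hV =>
          sub_eq_zero.2 (hx V (hC ▸ card_lt_card_of_lt hV)).symm
      exact ⟨c, fun _ => hc⟩
    · exact ⟨0, fun h => absurd h hC⟩
  choose c hc using exists_coeff
  let y (C) := if Nat.card (classRep C) = n then x C + c C else x C
  have hxy (C) (hC : n < Nat.card (classRep C)) : y C = x C := if_neg hC.ne'
  refine ⟨y, fun U hU => ?_⟩
  rcases hU.lt_or_eq with hlt | heq
  · rw [← hx U hlt]
    exact ghost_congr fun C hC => hxy C (hlt.trans_le hC)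
  · obtain ⟨g, hg⟩ := exists_conj_smul_classRep_eq U
    set C : SubgroupConjClasses G := Quotient.mk _ U
    have hC : Nat.card (classRep C) = n := by rw [heq, ← hg, card_conj_smul]
    have hdiff := ghost_classRep_sub_ghost (x := y) (y := x) fun D hD => hxy D (hC ▸ hD)
    rw [show y C = x C + c C from if_pos hC, add_sub_cancel_left, ← hc C hC,
      sub_left_inj] at hdiff
    rw [← hg, ghost_conj_smul, ha.1, hdiff]

theorem range_ghostMap : Set.range (ghostMap G (MvPolynomial σ ℤ)) = ghostCongruences G σ := by
  refine Set.Subset.antisymm (Set.range_subset_iff.2 ghostMap_mem_ghostCongruences) fun a ha => ?_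
  suffices h : ∃ x, ∀ U : Subgroup G, 0 ≤ Nat.card U → ghost U x = a U from
    h.imp fun x hx => funext fun U => hx U (Nat.zero_le _)
  refine Nat.decreasingInduction (motive := fun n _ =>
      ∃ x, ∀ U : Subgroup G, n ≤ Nat.card U → ghost U x = a U)
    (fun n _ ⟨x, hx⟩ => exists_ghost_eq_of_le_card ha hx) ⟨0, fun U hU => ?_⟩
    (Nat.zero_le (Nat.card G + 1))
  exact absurd (Subgroup.card_le_card_group U) (Nat.not_le.2 hU)

lemma expand_ghost_X (V : Subgroup G) (s : SubgroupConjClasses G → σ) :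
    expand (Nat.card V) (ghost V (X ∘ s : SubgroupConjClasses G → MvPolynomial σ ℤ)) =
      ∑ C, (mark V C : MvPolynomial σ ℤ) * X (s C) ^ Nat.card (classRep C) := by
  simp only [ghost_eq_sum_mark, map_sum, map_mul, map_pow, map_natCast, Function.comp_apply,
    expand_X]
  refine Finset.sum_congr rfl fun C _ => ?_
  by_cases hm : mark V C = 0
  · simp [hm]
  · rw [← pow_mul, Nat.mul_div_cancel' (card_dvd_of_subconj (subconj_of_mark_ne_zero hm))]

lemma mark_mul_mark_mem_burnsideCongruences (A : Type*) [CommSemiring A]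
    (C D : SubgroupConjClasses G) :
    (fun V : Subgroup G => (mark V C * mark V D : A)) ∈ burnsideCongruences G A := by
  have hcard (V : Subgroup G) : mark V C * mark V D =
      Nat.card (fixedPoints V ((G ⧸ classRep C) × (G ⧸ classRep D))) := by
    rw [mark, mark, ← Nat.card_prod]
    refine Nat.card_congr ((Equiv.Set.prod _ _).symm.trans ?_)
    exact Equiv.subtypeEquivRight fun p => (mem_fixedPoints_prod (M := V)).symm
  simp only [← Nat.cast_mul, hcard]
  exact card_fixedPoints_mem_burnsideCongruences A _

lemma ghost_X_mul_ghost_X_mem_ghostCongruences (s t : SubgroupConjClasses G → σ) :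
    (fun V => ghost V (X ∘ s) * ghost V (X ∘ t)) ∈ ghostCongruences G σ := by
  refine ⟨fun g U => by simp only [ghost_conj_smul], ?_⟩
  have hsum := sum_mem fun C (_ : C ∈ Finset.univ) => sum_mem fun D (_ : D ∈ Finset.univ) =>
    (burnsideCongruences G (MvPolynomial σ ℤ)).smul_mem
      (X (s C) ^ Nat.card (classRep C) * X (t D) ^ Nat.card (classRep D))
      (mark_mul_mark_mem_burnsideCongruences (MvPolynomial σ ℤ) C D)
  convert hsum using 1
  funext V
  simp only [map_mul, expand_ghost_X, Finset.sum_mul_sum, Finset.sum_apply, Pi.smul_apply,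
    smul_eq_mul]
  refine Finset.sum_congr rfl fun C _ => Finset.sum_congr rfl fun D _ => ?_
  ring

lemma one_mem_ghostCongruences : 1 ∈ ghostCongruences G σ :=
  ⟨fun _ _ => rfl, by
    simpa using card_fixedPoints_mem_burnsideCongruences (G := G) (MvPolynomial σ ℤ) Unit⟩

end GhostCongruences

lemma exists_ringHom_of_surjective {A B C : Type*} [NonAssocSemiring A] [NonAssocSemiring B]
    [NonAssocSemiring C] {p : A →+* B} (hp : Function.Surjective p) (g : A →+* C) {f : B → C}
    (h : ∀ a, f (p a) = g a) : ∃ F : B →+* C, ∀ b, F b = f b :=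
  ⟨{ toFun := f
     map_one' := by rw [← map_one p, h, map_one]
     map_zero' := by rw [← map_zero p, h, map_zero]
     map_add' := hp.forall₂.2 fun a b => by rw [← map_add, h, h, h, map_add]
     map_mul' := hp.forall₂.2 fun a b => by rw [← map_mul, h, h, h, map_mul] }, fun _ => rfl⟩

section GhostRing

open MvPolynomial

variable {G σ τ : Type*} [Group G] [Fintype G]

lemma comp_mem_ghostCongruences (φ : MvPolynomial σ ℤ →+* MvPolynomial τ ℤ)
    {a : Subgroup G → MvPolynomial σ ℤ} (ha : a ∈ ghostCongruences G σ) :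
    φ ∘ a ∈ ghostCongruences G τ := by
  obtain ⟨x, rfl⟩ := range_ghostMap.ge ha
  have h : φ ∘ ghostMap G _ x = ghostMap G _ (φ ∘ x) := funext fun U => (ghost_comp φ U x).symm
  exact h ▸ ghostMap_mem_ghostCongruences (φ ∘ x)

lemma mul_mem_ghostCongruences {a b : Subgroup G → MvPolynomial σ ℤ}
    (ha : a ∈ ghostCongruences G σ) (hb : b ∈ ghostCongruences G σ) :
    a * b ∈ ghostCongruences G σ := by
  obtain ⟨x, rfl⟩ := range_ghostMap.ge ha
  obtain ⟨y, rfl⟩ := range_ghostMap.ge hb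
  let φ : MvPolynomial (SubgroupConjClasses G ⊕ SubgroupConjClasses G) ℤ →ₐ[ℤ] MvPolynomial σ ℤ :=
    aeval (Sum.elim x y)
  have h := comp_mem_ghostCongruences φ.toRingHom
    (ghost_X_mul_ghost_X_mem_ghostCongruences (G := G) Sum.inl Sum.inr)
  convert h using 1
  funext U
  have hx : φ.toRingHom ∘ X ∘ Sum.inl = x := funext fun C => aeval_X _ _
  have hy : φ.toRingHom ∘ X ∘ Sum.inr = y := funext fun C => aeval_X _ _
  simp only [Pi.mul_apply, Function.comp_apply (f := φ.toRingHom), map_mul, ← ghost_comp, hx, hy,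
    ghostMap]

variable (G σ) in
/-- The ring of ghost families over `ℤ[σ]`. Its elements are the values of `ghostMap`, by
`range_ghostMap`. -/
noncomputable def ghostSubring : Subring (Subgroup G → MvPolynomial σ ℤ) where
  __ := ghostCongruences G σ
  one_mem' := one_mem_ghostCongruences
  mul_mem' := mul_mem_ghostCongruences

/-- The identification, by their ghost components, of the Witt vectors over `ℤ[σ]` with the
ghost ring. -/
noncomputable def ghostEquiv :
    (SubgroupConjClasses G → MvPolynomial σ ℤ) ≃ ghostSubring G σ :=
  (Equiv.ofInjective _ ghostMap_injective).trans (Equiv.setCongr range_ghostMap)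

lemma coe_ghostEquiv_apply (x : SubgroupConjClasses G → MvPolynomial σ ℤ) (U : Subgroup G) :
    (ghostEquiv x : Subgroup G → MvPolynomial σ ℤ) U = ghost U x :=
  rfl

/-- Functoriality of the ghost ring in the polynomial ring. -/
noncomputable def ghostSubringMap (φ : MvPolynomial σ ℤ →+* MvPolynomial τ ℤ) :
    ghostSubring G σ →+* ghostSubring G τ :=
  (φ.compLeft (Subgroup G)).restrict _ _ fun _ => comp_mem_ghostCongruences φ

lemma ghostSubringMap_ghostEquiv (φ : MvPolynomial σ ℤ →+* MvPolynomial τ ℤ)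
    (x : SubgroupConjClasses G → MvPolynomial σ ℤ) :
    ghostSubringMap φ (ghostEquiv x) = ghostEquiv (φ ∘ x) :=
  Subtype.ext <| funext fun U => (ghost_comp φ U x).symm

/-- The homomorphism from the universal ghost ring for pairs of Witt vectors that specialises the
two generic Witt vectors `X ∘ Sum.inl` and `X ∘ Sum.inr` to the coordinates of `a` and `b`. -/
noncomputable def specializeHom (a b : ghostSubring G σ) :
    ghostSubring G (SubgroupConjClasses G ⊕ SubgroupConjClasses G) →+* ghostSubring G σ :=
  ghostSubringMap (aeval (Sum.elim (ghostEquiv.symm a) (ghostEquiv.symm b))).toRingHom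

lemma specializeHom_inl (a b : ghostSubring G σ) :
    specializeHom a b (ghostEquiv (X ∘ Sum.inl)) = a := by
  rw [specializeHom, ghostSubringMap_ghostEquiv, ← Equiv.eq_symm_apply]
  exact funext fun C => aeval_X _ _

lemma specializeHom_inr (a b : ghostSubring G σ) :
    specializeHom a b (ghostEquiv (X ∘ Sum.inr)) = b := by
  rw [specializeHom, ghostSubringMap_ghostEquiv, ← Equiv.eq_symm_apply]
  exact funext fun C => aeval_X _ _

end GhostRing

section WittRing

open MvPolynomial

variable {G R R' : Type*} [Group G] [Fintype G] [CommRing R] [CommRing R']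

variable (R) in
/-- The ring homomorphism `ℤ[R] → R` sending the variable `X r` to `r`. -/
noncomputable def evalVars : MvPolynomial R ℤ →+* R :=
  (aeval (id : R → R)).toRingHom

lemma evalVars_X (r : R) : evalVars R (X r) = r :=
  aeval_X id r

/-- The Witt vector over `R` obtained from a ghost family over `ℤ[R]` by evaluating its Witt
coordinates at the elements of `R`. -/
noncomputable def toWittVec (a : ghostSubring G R) : WittVec G R :=
  evalVars R ∘ ghostEquiv.symm a

lemma toWittVec_ghostEquiv (x : SubgroupConjClasses G → MvPolynomial R ℤ) :
    toWittVec (ghostEquiv x) = evalVars R ∘ x := by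
  rw [toWittVec, Equiv.symm_apply_apply]

lemma toWittVec_surjective : Function.Surjective (toWittVec : ghostSubring G R → WittVec G R) :=
  fun x => ⟨ghostEquiv (X ∘ x),
    (toWittVec_ghostEquiv _).trans (funext fun C => evalVars_X (x C))⟩

lemma ghost_toWittVec (U : Subgroup G) (a : ghostSubring G R) :
    ghost U (toWittVec a) = evalVars R ((a : Subgroup G → MvPolynomial R ℤ) U) := by
  rw [toWittVec, ghost_comp, ← coe_ghostEquiv_apply, Equiv.apply_symm_apply]

lemma toWittVec_ghostSubringMap {σ : Type*} (φ : MvPolynomial σ ℤ →+* MvPolynomial R ℤ)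
    (a : ghostSubring G σ) :
    toWittVec (ghostSubringMap φ a) = (evalVars R).comp φ ∘ ghostEquiv.symm a := by
  obtain ⟨x, rfl⟩ := ghostEquiv.surjective a
  rw [ghostSubringMap_ghostEquiv, toWittVec_ghostEquiv, Equiv.symm_apply_apply]
  rfl

lemma toWittVec_specializeHom (a b : ghostSubring G R)
    (s : ghostSubring G (SubgroupConjClasses G ⊕ SubgroupConjClasses G)) :
    toWittVec (specializeHom a b s) =
      fun C => aeval (Sum.elim (toWittVec a) (toWittVec b)) (ghostEquiv.symm s C) := by
  rw [specializeHom, toWittVec_ghostSubringMap]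
  funext C
  refine congrArg (· (ghostEquiv.symm s C)) (ringHom_ext (by simp) ?_ :
    (evalVars R).comp _ = (aeval (Sum.elim (toWittVec a) (toWittVec b))).toRingHom)
  rintro (D | D) <;> simp [toWittVec]

lemma toWittVec_specializeHom_congr {a a' b b' : ghostSubring G R}
    (ha : toWittVec a = toWittVec a') (hb : toWittVec b = toWittVec b')
    (s : ghostSubring G (SubgroupConjClasses G ⊕ SubgroupConjClasses G)) :
    toWittVec (specializeHom a b s) = toWittVec (specializeHom a' b' s) := by
  rw [toWittVec_specializeHom, toWittVec_specializeHom, ha, hb]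

lemma toWittVec_add_congr {a a' b b' : ghostSubring G R} (ha : toWittVec a = toWittVec a')
    (hb : toWittVec b = toWittVec b') : toWittVec (a + b) = toWittVec (a' + b') := by
  have h := toWittVec_specializeHom_congr ha hb
    (ghostEquiv (X ∘ Sum.inl) + ghostEquiv (X ∘ Sum.inr))
  rwa [map_add, map_add, specializeHom_inl, specializeHom_inr, specializeHom_inl,
    specializeHom_inr] at h

lemma toWittVec_mul_congr {a a' b b' : ghostSubring G R} (ha : toWittVec a = toWittVec a')
    (hb : toWittVec b = toWittVec b') : toWittVec (a * b) = toWittVec (a' * b') := by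
  have h := toWittVec_specializeHom_congr ha hb
    (ghostEquiv (X ∘ Sum.inl) * ghostEquiv (X ∘ Sum.inr))
  rwa [map_mul, map_mul, specializeHom_inl, specializeHom_inr, specializeHom_inl,
    specializeHom_inr] at h

variable (G R) in
/-- The congruence on the ghost ring over `ℤ[R]` whose quotient is `WittVec G R`. -/
noncomputable def wittCon : RingCon (ghostSubring G R) where
  __ := Setoid.ker toWittVec
  add' := toWittVec_add_congr
  mul' := toWittVec_mul_congr

variable (G R) in
/-- The bijection identifying `WittVec G R` with the quotient by `wittCon`, along which the ring
structure is transported. -/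
noncomputable def quotientWittConEquiv : (wittCon G R).Quotient ≃ WittVec G R :=
  Setoid.quotientKerEquivOfSurjective toWittVec toWittVec_surjective

variable (G R) in
/-- The ring of Witt vectors, as a quotient of the ghost ring over `ℤ[R]`. -/
noncomputable abbrev wittRing : CommRing (WittVec G R) :=
  (quotientWittConEquiv G R).symm.commRing

attribute [local instance] wittRing

variable (G R) in
/-- `toWittVec` as a ring homomorphism. -/
noncomputable def toWittVecHom : ghostSubring G R →+* WittVec G R where
  __ := (quotientWittConEquiv G R).symm.ringEquiv.symm.toRingHom.comp (wittCon G R).mk'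
  toFun := toWittVec

lemma exists_ringHom_ghost (U : Subgroup G) :
    ∃ F : WittVec G R →+* R, ∀ x, F x = ghost U x :=
  exists_ringHom_of_surjective (p := toWittVecHom G R) toWittVec_surjective
    (((evalVars R).comp (Pi.evalRingHom _ U)).comp (ghostSubring G R).subtype) (ghost_toWittVec U)

lemma comp_toWittVec (h : R →+* R') (a : ghostSubring G R) :
    h ∘ toWittVec a = toWittVec (ghostSubringMap (rename h).toRingHom a) := by
  rw [toWittVec_ghostSubringMap, toWittVec, ← Function.comp_assoc]
  refine congrArg (fun f => f ∘ ghostEquiv.symm a) (congrArg DFunLike.coe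
    (ringHom_ext (by simp) fun r => ?_ :
      h.comp (evalVars R) = (evalVars R').comp (rename h).toRingHom))
  simp [evalVars_X]

lemma exists_ringHom_comp (h : R →+* R') :
    ∃ F : WittVec G R →+* WittVec G R', ∀ x, F x = h ∘ x :=
  exists_ringHom_of_surjective (p := toWittVecHom G R) toWittVec_surjective
    ((toWittVecHom G R').comp (ghostSubringMap (rename h).toRingHom)) (comp_toWittVec h)

end WittRing

/-- **Existence part of the theorem of Dress and Siebeneicher.**  For every finite
group `G` there is an assignment, to each commutative ring `R`, of a commutative
ring structure on the set `W_G(R)` of functions from conjugacy classes of subgroups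
of `G` to `R`, such that (a) for every ring homomorphism `h : R → R'` the map
`x ↦ h ∘ x` is a ring homomorphism `W_G(R) → W_G(R')`, and (b) for every subgroup
`U ≤ G` the ghost map `φ_U : W_G(R) → R` is a ring homomorphism. -/
theorem witt_vectors_exist (G : Type u) [Group G] [Fintype G] :
    ∃ W : ∀ (R : Type u) [CommRing R], CommRing (WittVec G R),
      (∀ (R R' : Type u) [CommRing R] [CommRing R'] (h : R →+* R'),
        letI := W R
        letI := W R'
        ∃ f : WittVec G R →+* WittVec G R', ∀ x : WittVec G R, f x = h ∘ x) ∧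
      (∀ (R : Type u) [CommRing R] (U : Subgroup G),
        letI := W R
        ∃ f : WittVec G R →+* R, ∀ x : WittVec G R, f x = ghost U x) :=
  ⟨fun R _ => wittRing G R, fun _ _ _ _ => exists_ringHom_comp, fun _ _ => exists_ringHom_ghost⟩
end

section
/- Let G be a finite group. There exists a family (s_U), indexed by the conjugacy classes of subgroups U ≤ G, where s_U is a polynomial with integer coefficients in the variables a_V, b_V indexed by the conjugacy classes of subgroups V ≤ G with U subconjugate to V, such that for every commutative ring R, every subgroup H ≤ G, and all x = (x_V)'_{V ≤ G}, y = (y_V)'_{V ≤ G} ∈ W_G(R): φ_H(x) + φ_H(y) = φ_H((s_U(x_V, y_V | U ⪯ V ≤ G))'_{U ≤ G}). -/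
open MulAction Pointwise
open scoped Classical

/-!
For a subgroup `V` let `e_V(a)` be the function `U ↦ |(G/V)^U| a^(V:U)`, so that the ghost vector
of `x` is `∑' e_V(x_V)`. Expanding `(a + b)^((V:U))` over the `U`-invariant subsets of the
`U`-invariant cosets of `V` and grouping the pairs (coset, nonempty proper subset) by `G`-orbits
writes `e_V(a + b) - e_V(a) - e_V(b)` as a sum of `e_W(a^i b^j)` with `W` the stabilizers of such
pairs; these are subconjugate to `V` and of smaller order. Hence `e_V` is additive modulo terms of
smaller order, and descending on the order every integral combination of such terms is a ghost
vector. Applied to the two generic vectors over `ℤ[a, b]`, with the coefficient at `U` confined to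
the polynomials in the `a_V`, `b_V` for `U ⪯ V`, this gives the `s_U`.
-/

section LeadingTerms

variable {A B K ι : Type*} [AddGroup A] [AddCommGroup B]

theorem exists_sub_mem_of_mem_closure_image_sup {S : AddSubgroup A} {e : A → B}
    {N : AddSubgroup B} (he : ∀ α ∈ S, ∀ β ∈ S, e (α + β) - e α - e β ∈ N) {m : B}
    (hm : m ∈ AddSubgroup.closure (e '' S) ⊔ N) : ∃ γ ∈ S, m - e γ ∈ N := by
  let f : S →+ B ⧸ N := AddMonoidHom.mk' (fun α => (e α : B ⧸ N)) fun α β => by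
    rw [← QuotientAddGroup.mk_add, ← sub_eq_zero, ← QuotientAddGroup.mk_sub,
      QuotientAddGroup.eq_zero_iff, ← sub_sub]
    exact he α α.2 β β.2
  have hle : AddSubgroup.closure (e '' S) ⊔ N ≤ f.range.comap (QuotientAddGroup.mk' N) := by
    refine sup_le ((AddSubgroup.closure_le _).2 ?_) fun n hn => ?_
    · rintro _ ⟨α, hα, rfl⟩
      exact ⟨⟨α, hα⟩, rfl⟩
    · exact ⟨0, by rw [map_zero]; exact ((QuotientAddGroup.eq_zero_iff n).2 hn).symm⟩
  obtain ⟨γ, hγ⟩ := hle hm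
  refine ⟨γ, γ.2, ?_⟩
  rw [← QuotientAddGroup.eq_zero_iff, QuotientAddGroup.mk_sub, sub_eq_zero]
  exact hγ.symm

theorem exists_sum_eq_of_mem_closure_of_isLowerSet [LinearOrder ι] (r : K → ι)
    (S : K → AddSubgroup A) (e : K → A → B)
    (he : ∀ k, ∀ α ∈ S k, ∀ β ∈ S k, e k (α + β) - e k α - e k β ∈
      AddSubgroup.closure (⋃ j ∈ {j | r j < r k}, e j '' S j))
    (T : Finset K) (hT : ∀ k ∈ T, ∀ j, r j < r k → j ∈ T) :
    ∀ m ∈ AddSubgroup.closure (⋃ j ∈ T, e j '' S j),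
      ∃ z : K → A, (∀ k, z k ∈ S k) ∧ ∑ k ∈ T, e k (z k) = m := by
  induction T using Finset.induction_on_max_value r with
  | empty =>
    intro m hm
    obtain rfl : m = 0 := by simpa using hm
    exact ⟨0, fun k => (S k).zero_mem, Finset.sum_empty⟩
  | insert a T ha hmax ih =>
    intro m hm
    have lt_mem : ∀ k ∈ insert a T, ∀ j, r j < r k → j ∈ T := fun k hk j hj =>
      Finset.mem_of_mem_insert_of_ne (hT k hk j hj) <| by
        rintro rfl
        rcases Finset.mem_insert.1 hk with rfl | hk
        exacts [hj.false, (hmax k hk).not_gt hj]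
    have he_a : ∀ α ∈ S a, ∀ β ∈ S a, e a (α + β) - e a α - e a β ∈
        AddSubgroup.closure (⋃ j ∈ T, e j '' S j) := fun α hα β hβ =>
      AddSubgroup.closure_mono
        (Set.biUnion_mono (lt_mem a (T.mem_insert_self a)) fun _ _ => le_rfl) (he a α hα β hβ)
    rw [Finset.set_biUnion_insert, AddSubgroup.closure_union] at hm
    obtain ⟨γ, hγ, hmγ⟩ := exists_sub_mem_of_mem_closure_image_sup he_a hm
    obtain ⟨z, hz, hsum⟩ := ih (fun k hk => lt_mem k (Finset.mem_insert_of_mem hk)) _ hmγ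
    refine ⟨Function.update z a γ, fun k => ?_, ?_⟩
    · obtain rfl | hk := eq_or_ne k a
      · rwa [Function.update_self]
      · rw [Function.update_of_ne hk]; exact hz k
    · have hcongr : ∑ k ∈ T, e k (Function.update z a γ k) = ∑ k ∈ T, e k (z k) :=
        Finset.sum_congr rfl fun k hk => by
          rw [Function.update_of_ne (ne_of_mem_of_not_mem hk ha)]
      rw [Finset.sum_insert ha, Function.update_self, hcongr, hsum, add_sub_cancel]

end LeadingTerms

section InvariantFinsets

variable {H α : Type*} [Group H] [MulAction H α]

theorem smul_mem_of_mem_fixedPoints {s : Finset α} (hs : s ∈ fixedPoints H (Finset α)) (h : H)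
    {x : α} (hx : x ∈ s) : h • x ∈ s := by
  rw [← hs h]
  exact Finset.smul_mem_smul_finset hx

theorem filter_orbit_mem_fixedPoints {c : Finset α} (hc : c ∈ fixedPoints H (Finset α))
    (t : Finset (orbitRel.Quotient H α)) :
    c.filter (Quotient.mk _ · ∈ t) ∈ fixedPoints H (Finset α) := by
  intro h
  refine Finset.eq_of_subset_of_card_le (fun y hy => ?_) (Finset.card_smul_finset _ _).ge
  obtain ⟨x, hx, rfl⟩ := Finset.mem_smul_finset.1 hy
  obtain ⟨hxc, hxt⟩ := Finset.mem_filter.1 hx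
  have hx_orbit : (Quotient.mk _ (h • x) : orbitRel.Quotient H α) = Quotient.mk _ x :=
    Quotient.sound (mem_orbit x h)
  exact Finset.mem_filter.2 ⟨smul_mem_of_mem_fixedPoints hc h hxc, hx_orbit ▸ hxt⟩

theorem filter_orbit_mem_image {c s : Finset α} (hsc : s ⊆ c)
    (hs : s ∈ fixedPoints H (Finset α)) :
    c.filter (Quotient.mk (orbitRel H α) · ∈ s.image (Quotient.mk _)) = s := by
  ext x
  simp only [Finset.mem_filter, Finset.mem_image]
  refine ⟨?_, fun hx => ⟨hsc hx, x, hx, rfl⟩⟩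
  rintro ⟨_, y, hy, hyx⟩
  obtain ⟨h, rfl⟩ := orbitRel_apply.1 (Quotient.exact hyx.symm)
  exact smul_mem_of_mem_fixedPoints hs h hy

variable [IsCancelSMul H α]

theorem card_eq_card_mul_card_image_orbit {s : Finset α} (hs : s ∈ fixedPoints H (Finset α)) :
    s.card = Nat.card H * (s.image (Quotient.mk (orbitRel H α))).card := by
  rw [Finset.card_eq_sum_card_image (Quotient.mk (orbitRel H α)) s,
    Finset.sum_const_nat (m := Nat.card H), mul_comm]
  intro q hq
  obtain ⟨x, hx, rfl⟩ := Finset.mem_image.1 hq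
  have hfiber : (s.filter fun y => Quotient.mk (orbitRel H α) y = Quotient.mk _ x : Set α) =
      orbit H x := by
    ext y
    rw [Finset.mem_coe, Finset.mem_filter, Quotient.eq, orbitRel_apply, and_iff_right_iff_imp]
    rintro ⟨h, rfl⟩
    exact smul_mem_of_mem_fixedPoints hs h hx
  rw [← Set.ncard_coe_finset, hfiber, ← Nat.card_coe_set_eq]
  exact Nat.card_range_of_injective fun g h hgh => IsCancelSMul.right_cancel g h x hgh

theorem card_dvd_card_of_mem_fixedPoints {s : Finset α} (hs : s ∈ fixedPoints H (Finset α)) :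
    Nat.card H ∣ s.card :=
  Dvd.intro _ (card_eq_card_mul_card_image_orbit hs).symm

theorem sum_powerset_fixedPoints_pow_mul_pow [Finite H] {R : Type*} [CommSemiring R] (a b : R)
    {c : Finset α} (hc : c ∈ fixedPoints H (Finset α)) :
    ∑ s ∈ c.powerset with s ∈ fixedPoints H (Finset α),
        a ^ (s.card / Nat.card H) * b ^ ((c.card - s.card) / Nat.card H) =
      (a + b) ^ (c.card / Nat.card H) := by
  let π : α → orbitRel.Quotient H α := Quotient.mk _
  have card_div {s : Finset α} (hs : s ∈ fixedPoints H (Finset α)) :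
      s.card / Nat.card H = (s.image π).card := by
    rw [card_eq_card_mul_card_image_orbit hs, Nat.mul_div_cancel_left _ Nat.card_pos]
  rw [card_div hc, ← Finset.sum_pow_mul_eq_add_pow]
  refine Finset.sum_bij' (fun s _ => s.image π) (fun t _ => c.filter (π · ∈ t)) ?_ ?_ ?_ ?_ ?_
  · intro s hs
    exact Finset.mem_powerset.2
      (Finset.image_subset_image (Finset.mem_powerset.1 (Finset.mem_filter.1 hs).1))
  · intro t _
    exact Finset.mem_filter.2 ⟨Finset.mem_powerset.2 (Finset.filter_subset _ _),
      filter_orbit_mem_fixedPoints hc t⟩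
  · intro s hs
    obtain ⟨hsc, hs⟩ := Finset.mem_filter.1 hs
    exact filter_orbit_mem_image (Finset.mem_powerset.1 hsc) hs
  · intro t ht
    rw [← Finset.filter_image (p := (· ∈ t)), Finset.filter_mem_eq_inter,
      Finset.inter_eq_right.2 (Finset.mem_powerset.1 ht)]
  · intro s hs
    have hs := (Finset.mem_filter.1 hs).2
    rw [card_div hs, card_eq_card_mul_card_image_orbit hs, card_eq_card_mul_card_image_orbit hc,
      ← Nat.mul_sub, Nat.mul_div_cancel_left _ Nat.card_pos]

theorem sum_proper_fixedPoints_pow_mul_pow [Finite H] {R : Type*} [CommRing R] (a b : R)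
    {c : Finset α} (hc : c ∈ fixedPoints H (Finset α)) (hne : c.Nonempty) :
    ∑ s ∈ c.ssubsets.erase ∅ with s ∈ fixedPoints H (Finset α),
        a ^ (s.card / Nat.card H) * b ^ ((c.card - s.card) / Nat.card H) =
      (a + b) ^ (c.card / Nat.card H) - a ^ (c.card / Nat.card H) - b ^ (c.card / Nat.card H) := by
  have hempty : (∅ : Finset α) ∈ fixedPoints H (Finset α) := fun h => Finset.smul_finset_empty h
  have hpowerset : c.powerset = insert c (insert ∅ (c.ssubsets.erase ∅)) := by
    rw [Finset.insert_erase (Finset.empty_mem_ssubsets hne), Finset.ssubsets,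
      Finset.insert_erase (Finset.mem_powerset_self c)]
  rw [← sum_powerset_fixedPoints_pow_mul_pow a b hc, hpowerset, Finset.filter_insert, if_pos hc,
    Finset.filter_insert, if_pos hempty, Finset.sum_insert (by simp [hne.ne_empty]),
    Finset.sum_insert (by simp)]
  simp

end InvariantFinsets

theorem pow_div_pow_div {M : Type*} [Monoid M] (a : M) {k m n : ℕ} (hm : 0 < m) (hkm : k ∣ m)
    (hmn : m ∣ n) : (a ^ (n / m)) ^ (m / k) = a ^ (n / k) := by
  rw [← pow_mul, Nat.div_mul_div_comm hmn hkm, mul_comm n, Nat.mul_div_mul_left _ _ hm]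

section Stabilizers

variable {G X : Type*} [Group G] [MulAction G X]

theorem mem_fixedPoints_iff_le_stabilizer {U : Subgroup G} {x : X} :
    x ∈ fixedPoints U X ↔ U ≤ stabilizer G x :=
  ⟨fun h u hu => h ⟨u, hu⟩, fun h u => h u.2⟩

theorem stabilizer_smul_eq_toConjAct_smul (g : G) (x : X) :
    stabilizer G (g • x) = ConjAct.toConjAct g • stabilizer G x :=
  stabilizer_smul_eq_stabilizer_map_conj g x

theorem card_stabilizer_smul (g : G) (x : X) :
    Nat.card (stabilizer G (g • x)) = Nat.card (stabilizer G x) :=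
  (Nat.card_congr (stabilizerEquivStabilizer rfl).toEquiv).symm

theorem stabilizer_coset (V : Subgroup G) (g : G) :
    stabilizer G (g : G ⧸ V) = ConjAct.toConjAct g • V := by
  rw [← stabilizer_quotient V, ← stabilizer_smul_eq_toConjAct_smul, Quotient.smul_coe, smul_eq_mul,
    mul_one, stabilizer_quotient]

theorem ncard_fixedPoints_inter_orbit (U : Subgroup G) (x : X) :
    (fixedPoints U X ∩ orbit G x).ncard = Nat.card (fixedPoints U (G ⧸ stabilizer G x)) := by
  have himage : fixedPoints U X ∩ orbit G x =
      ofQuotientStabilizer G x '' fixedPoints U (G ⧸ stabilizer G x) := by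
    ext y
    constructor
    · rintro ⟨hy, g, rfl⟩
      refine ⟨g, fun u => injective_ofQuotientStabilizer G x ?_, rfl⟩
      exact (ofQuotientStabilizer_smul G x (u : G) g).trans (hy u)
    · rintro ⟨c, hc, rfl⟩
      refine ⟨fun u => ?_, ofQuotientStabilizer_mem_orbit G x c⟩
      rw [Subgroup.smul_def, ← ofQuotientStabilizer_smul]
      exact congrArg _ (hc u)
  rw [himage, Set.ncard_image_of_injective _ (injective_ofQuotientStabilizer G x),
    Nat.card_coe_set_eq]

theorem Subconj.trans {U V W : Subgroup G} (hUV : Subconj U V) (hVW : Subconj V W) :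
    Subconj U W := by
  obtain ⟨g, hg⟩ := hUV
  obtain ⟨k, hk⟩ := hVW
  refine ⟨g * k, hg.trans ?_⟩
  rw [mul_smul]
  exact Subgroup.pointwise_smul_le_pointwise_smul_iff.2 hk

theorem Subconj.refl (U : Subgroup G) : Subconj U U :=
  ⟨1, (one_smul _ U).ge⟩

theorem subconj_iff_exists_mem_fixedPoints {U V : Subgroup G} :
    Subconj U V ↔ ∃ c : G ⧸ V, c ∈ fixedPoints U (G ⧸ V) := by
  have hcoset (g : G) : (g : G ⧸ V) ∈ fixedPoints U (G ⧸ V) ↔ U ≤ ConjAct.toConjAct g • V :=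
    mem_fixedPoints_iff_le_stabilizer.trans (by rw [stabilizer_coset])
  rw [Subconj, ConjAct.toConjAct.surjective.exists, QuotientGroup.mk_surjective.exists]
  exact exists_congr fun g => (hcoset g).symm

theorem exists_smul_eq_out_mk (V : Subgroup G) :
    ∃ g : ConjAct G, g • V = Quotient.out (Quotient.mk _ V : SubgroupConjClasses G) :=
  orbitRel_apply.1 (Quotient.mk_out (s := orbitRel (ConjAct G) (Subgroup G)) V)

theorem card_out_mk (V : Subgroup G) :
    Nat.card (Quotient.out (Quotient.mk _ V : SubgroupConjClasses G) : Subgroup G) =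
      Nat.card V := by
  obtain ⟨g, hg⟩ := exists_smul_eq_out_mk V
  rw [← hg]
  exact (Nat.card_congr (Subgroup.equivSMul g V).toEquiv).symm

theorem subconj_out_mk (V : Subgroup G) :
    Subconj (Quotient.out (Quotient.mk _ V : SubgroupConjClasses G)) V :=
  (exists_smul_eq_out_mk V).imp fun _ hg => hg.ge

end Stabilizers

section GhostTerm

variable {G A : Type*} [Group G] [CommRing A]

/-- The summand `|(G/V)^U| · a ^ (V : U)` of the ghost map belonging to the subgroup `V`, as a
function of `U`. It vanishes unless `U` is subconjugate to `V`, because then `(G/V)^U = ∅`. -/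
noncomputable def ghostTerm (V : Subgroup G) (a : A) (U : Subgroup G) : A :=
  (Nat.card (fixedPoints U (G ⧸ V)) : A) * a ^ (Nat.card V / Nat.card U)

theorem ghost_eq_sum_ghostTerm [Fintype G] (U : Subgroup G) (x : SubgroupConjClasses G → A) :
    ghost U x = ∑ C, ghostTerm (Quotient.out C) (x C) U := by
  rw [ghost, finsum_eq_sum_of_fintype]
  refine Finset.sum_congr rfl fun C _ => ?_
  split_ifs with h
  · rfl
  · rw [subconj_iff_exists_mem_fixedPoints, ← Set.nonempty_def, Set.not_nonempty_iff_eq_empty] at h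
    simp [ghostTerm, h]

theorem map_ghost [Fintype G] {B : Type*} [CommRing B] (f : A →+* B) (U : Subgroup G)
    (x : SubgroupConjClasses G → A) : f (ghost U x) = ghost U fun C => f (x C) := by
  simp [ghost_eq_sum_ghostTerm, ghostTerm]

theorem ghostTerm_conj_smul (g : ConjAct G) (V : Subgroup G) (a : A) :
    ghostTerm (g • V) a = ghostTerm V a := by
  let c : G ⧸ V := ConjAct.ofConjAct g • ((1 : G) : G ⧸ V)
  have hc : stabilizer G c = g • V := by
    rw [stabilizer_smul_eq_toConjAct_smul, stabilizer_quotient, ConjAct.toConjAct_ofConjAct]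
  funext U
  have hcard : Nat.card (fixedPoints U (G ⧸ g • V)) = Nat.card (fixedPoints U (G ⧸ V)) := by
    rw [← hc, ← ncard_fixedPoints_inter_orbit, orbit_smul, ncard_fixedPoints_inter_orbit,
      stabilizer_quotient]
  rw [ghostTerm, ghostTerm, hcard, ← Nat.card_congr (Subgroup.equivSMul g V).toEquiv]

theorem ghostTerm_out_mk (V : Subgroup G) :
    ghostTerm (A := A) (Quotient.out (Quotient.mk _ V : SubgroupConjClasses G)) =
      ghostTerm V := by
  obtain ⟨g, hg⟩ := exists_smul_eq_out_mk V
  funext a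
  rw [← hg, ghostTerm_conj_smul]

theorem sum_fixedPoints_pow {X : Type*} [MulAction G X] [Fintype X] (f : X → A)
    (hf : ∀ (g : G) x, f (g • x) = f x) (U : Subgroup G) :
    ∑ x : X with x ∈ fixedPoints U X, f x ^ (Nat.card (stabilizer G x) / Nat.card U) =
      ∑ ω : orbitRel.Quotient G X, ghostTerm (stabilizer G ω.out) (f ω.out) U := by
  rw [← Finset.sum_fiberwise _ (Quotient.mk (orbitRel G X))]
  refine Finset.sum_congr rfl fun ω _ => ?_
  have hmk (x : X) : Quotient.mk (orbitRel G X) x = ω ↔ x ∈ orbit G ω.out := by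
    rw [← orbitRel_apply, ← Quotient.eq, Quotient.out_eq]
  have hcard : ((Finset.univ.filter (· ∈ fixedPoints U X)).filter
      (Quotient.mk (orbitRel G X) · = ω)).card =
      Nat.card (fixedPoints U (G ⧸ stabilizer G ω.out)) := by
    rw [← ncard_fixedPoints_inter_orbit, ← Set.ncard_coe_finset]
    congr 1
    ext x
    simp [hmk]
  rw [ghostTerm, ← hcard, ← nsmul_eq_mul]
  refine Finset.sum_eq_card_nsmul fun x hx => ?_
  obtain ⟨g, rfl⟩ := (hmk x).1 (Finset.mem_filter.1 hx).2
  rw [hf, card_stabilizer_smul]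

end GhostTerm

section CosetParts

variable {G : Type*} [Group G] [Fintype G]

/-- The left coset `c ∈ G ⧸ V` as a finset of elements of `G`. -/
noncomputable def cosetFinset {V : Subgroup G} (c : G ⧸ V) : Finset G :=
  Finset.univ.filter fun g => (g : G ⧸ V) = c

theorem mem_cosetFinset {V : Subgroup G} {c : G ⧸ V} {g : G} :
    g ∈ cosetFinset c ↔ (g : G ⧸ V) = c := by
  simp [cosetFinset]

theorem cosetFinset_nonempty {V : Subgroup G} (c : G ⧸ V) : (cosetFinset c).Nonempty :=
  (QuotientGroup.mk_surjective c).imp fun _ => mem_cosetFinset.2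

theorem card_cosetFinset {V : Subgroup G} (c : G ⧸ V) : (cosetFinset c).card = Nat.card V := by
  have hcoe : (cosetFinset c : Set G) = QuotientGroup.mk ⁻¹' {c} := by
    ext g
    exact mem_cosetFinset
  rw [← Set.ncard_coe_finset, hcoe, ← Nat.card_coe_set_eq, QuotientGroup.card_preimage_mk,
    Nat.card_coe_set_eq {c}, Set.ncard_singleton, mul_one]

theorem smul_cosetFinset {V : Subgroup G} (g : G) (c : G ⧸ V) :
    g • cosetFinset c = cosetFinset (g • c) := by
  ext x
  rw [← Finset.inv_smul_mem_iff, mem_cosetFinset, mem_cosetFinset, ← inv_smul_eq_iff]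
  rfl

theorem cosetFinset_mem_fixedPoints {U V : Subgroup G} {c : G ⧸ V}
    (hc : c ∈ fixedPoints U (G ⧸ V)) : cosetFinset c ∈ fixedPoints U (Finset G) := fun u =>
  (smul_cosetFinset (u : G) c).trans (congrArg cosetFinset (hc u))

/-- The `G`-set of pairs `(c, s)` of a left coset `c` of `V` and a nonempty proper subset `s` of
it. Keeping `c` in the pair makes a sum over all pairs a double sum. -/
def properCosetParts (V : Subgroup G) : SubMulAction G ((G ⧸ V) × Finset G) where
  carrier := {p | p.2.Nonempty ∧ p.2 ⊂ cosetFinset p.1}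
  smul_mem' g p hp := by
    refine ⟨hp.1.smul_finset, ?_⟩
    rw [Prod.smul_fst, ← smul_cosetFinset]
    exact (Finset.smul_finset_subset_smul_finset hp.2.subset).ssubset_of_ne
      fun h => hp.2.ne (smul_left_cancel g h)

variable {V : Subgroup G}

theorem mem_fixedPoints_properCosetParts {U : Subgroup G} {p : properCosetParts V} :
    p ∈ fixedPoints U (properCosetParts V) ↔
      p.1.1 ∈ fixedPoints U (G ⧸ V) ∧ p.1.2 ∈ fixedPoints U (Finset G) := by
  simp only [mem_fixedPoints, ← forall_and]
  exact forall_congr' fun u => Subtype.ext_iff.trans Prod.ext_iff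

theorem mem_fixedPoints_stabilizer_properCosetParts (p : properCosetParts V) :
    p.1.1 ∈ fixedPoints (stabilizer G p) (G ⧸ V) ∧
      p.1.2 ∈ fixedPoints (stabilizer G p) (Finset G) :=
  mem_fixedPoints_properCosetParts.1 (mem_fixedPoints_iff_le_stabilizer.2 le_rfl)

theorem subconj_stabilizer_properCosetParts (p : properCosetParts V) :
    Subconj (stabilizer G p) V :=
  subconj_iff_exists_mem_fixedPoints.2 ⟨_, (mem_fixedPoints_stabilizer_properCosetParts p).1⟩

theorem card_stabilizer_dvd_card_part (p : properCosetParts V) :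
    Nat.card (stabilizer G p) ∣ p.1.2.card :=
  card_dvd_card_of_mem_fixedPoints (mem_fixedPoints_stabilizer_properCosetParts p).2

theorem card_stabilizer_dvd_card_sub_card_part (p : properCosetParts V) :
    Nat.card (stabilizer G p) ∣ Nat.card V - p.1.2.card := by
  have hcoset := cosetFinset_mem_fixedPoints (mem_fixedPoints_stabilizer_properCosetParts p).1
  rw [← card_cosetFinset p.1.1]
  exact Nat.dvd_sub (card_dvd_card_of_mem_fixedPoints hcoset) (card_stabilizer_dvd_card_part p)

theorem card_stabilizer_properCosetParts_lt (p : properCosetParts V) :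
    Nat.card (stabilizer G p) < Nat.card V :=
  calc Nat.card (stabilizer G p)
    _ ≤ p.1.2.card := Nat.le_of_dvd p.2.1.card_pos (card_stabilizer_dvd_card_part p)
    _ < (cosetFinset p.1.1).card := Finset.card_lt_card p.2.2
    _ = Nat.card V := card_cosetFinset p.1.1

theorem sum_fixedPoints_properCosetParts {M : Type*} [AddCommMonoid M] (f : Finset G → M)
    (U : Subgroup G) :
    ∑ p : properCosetParts V with p ∈ fixedPoints U (properCosetParts V), f p.1.2 =
      ∑ c : G ⧸ V with c ∈ fixedPoints U (G ⧸ V),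
        ∑ s ∈ (cosetFinset c).ssubsets.erase ∅ with s ∈ fixedPoints U (Finset G), f s := by
  have mem_parts {c : G ⧸ V} {s : Finset G} :
      s ∈ (cosetFinset c).ssubsets.erase ∅ ↔ (c, s) ∈ properCosetParts V := by
    rw [Finset.mem_erase, Finset.mem_ssubsets, ← Finset.nonempty_iff_ne_empty]
    rfl
  rw [Finset.sum_sigma']
  refine Finset.sum_bij' (fun p _ => ⟨p.1.1, p.1.2⟩)
    (fun q hq => ⟨(q.1, q.2), mem_parts.1 (Finset.mem_filter.1 (Finset.mem_sigma.1 hq).2).1⟩)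
    (fun p hp => ?_) (fun q hq => ?_) (fun _ _ => rfl) (fun _ _ => rfl) fun _ _ => rfl
  · obtain ⟨hc, hs⟩ := mem_fixedPoints_properCosetParts.1 (Finset.mem_filter.1 hp).2
    exact Finset.mem_sigma.2 ⟨Finset.mem_filter.2 ⟨Finset.mem_univ _, hc⟩,
      Finset.mem_filter.2 ⟨mem_parts.2 p.2, hs⟩⟩
  · obtain ⟨hc, hs⟩ := Finset.mem_sigma.1 hq
    exact Finset.mem_filter.2 ⟨Finset.mem_univ _, mem_fixedPoints_properCosetParts.2
      ⟨(Finset.mem_filter.1 hc).2, (Finset.mem_filter.1 hs).2⟩⟩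

variable {A : Type*} [CommRing A]

theorem ghostTerm_add_sub_sub_eq_sum_fixedPoints (a b : A) (U : Subgroup G) :
    ghostTerm V (a + b) U - ghostTerm V a U - ghostTerm V b U =
      ∑ p : properCosetParts V with p ∈ fixedPoints U (properCosetParts V),
        a ^ (p.1.2.card / Nat.card U) * b ^ ((Nat.card V - p.1.2.card) / Nat.card U) := by
  let n := Nat.card V / Nat.card U
  have sum_coset {c : G ⧸ V} (hc : c ∈ fixedPoints U (G ⧸ V)) :
      ∑ s ∈ (cosetFinset c).ssubsets.erase ∅ with s ∈ fixedPoints U (Finset G),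
          a ^ (s.card / Nat.card U) * b ^ ((Nat.card V - s.card) / Nat.card U) =
        (a + b) ^ n - a ^ n - b ^ n := by
    have hsum := sum_proper_fixedPoints_pow_mul_pow a b (cosetFinset_mem_fixedPoints hc)
      (cosetFinset_nonempty c)
    rwa [card_cosetFinset] at hsum
  rw [sum_fixedPoints_properCosetParts fun s =>
      a ^ (s.card / Nat.card U) * b ^ ((Nat.card V - s.card) / Nat.card U),
    Finset.sum_congr rfl fun c hc => sum_coset (Finset.mem_filter.1 hc).2, Finset.sum_const,
    ← Fintype.card_subtype, ← Nat.card_eq_fintype_card, nsmul_eq_mul, mul_sub, mul_sub]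
  rfl

theorem ghostTerm_add_sub_sub (a b : A) :
    ghostTerm V (a + b) - ghostTerm V a - ghostTerm V b =
      ∑ ω : orbitRel.Quotient G (properCosetParts V),
        ghostTerm (stabilizer G ω.out)
          (a ^ (ω.out.1.2.card / Nat.card (stabilizer G ω.out)) *
            b ^ ((Nat.card V - ω.out.1.2.card) / Nat.card (stabilizer G ω.out))) := by
  let f (p : properCosetParts V) : A :=
    a ^ (p.1.2.card / Nat.card (stabilizer G p)) *
      b ^ ((Nat.card V - p.1.2.card) / Nat.card (stabilizer G p))
  have hf (g : G) (p : properCosetParts V) : f (g • p) = f p := by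
    simp only [f, card_stabilizer_smul, SubMulAction.val_smul, Prod.smul_snd,
      Finset.card_smul_finset]
  funext U
  rw [Pi.sub_apply, Pi.sub_apply, ghostTerm_add_sub_sub_eq_sum_fixedPoints, Finset.sum_apply,
    ← sum_fixedPoints_pow f hf U]
  refine Finset.sum_congr rfl fun p hp => ?_
  have hU : Nat.card U ∣ Nat.card (stabilizer G p) :=
    Subgroup.card_dvd_of_le (mem_fixedPoints_iff_le_stabilizer.1 (Finset.mem_filter.1 hp).2)
  rw [mul_pow, pow_div_pow_div _ Nat.card_pos hU (card_stabilizer_dvd_card_part p),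
    pow_div_pow_div _ Nat.card_pos hU (card_stabilizer_dvd_card_sub_card_part p)]

end CosetParts

section GhostVectors

variable {G : Type*} [Group G]

theorem ghostTerm_add_sub_sub_mem_closure [Finite G] {A : Type*} [CommRing A]
    {S : SubgroupConjClasses G → Subring A}
    (hS : ∀ C D : SubgroupConjClasses G, Subconj C.out D.out → S D ≤ S C)
    (C : SubgroupConjClasses G) {a b : A} (ha : a ∈ S C) (hb : b ∈ S C) :
    ghostTerm C.out (a + b) - ghostTerm C.out a - ghostTerm C.out b ∈
      AddSubgroup.closure (⋃ D ∈ {D : SubgroupConjClasses G | Nat.card D.out < Nat.card C.out},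
        ghostTerm D.out '' (S D : Set A)) := by
  have := Fintype.ofFinite G
  rw [ghostTerm_add_sub_sub]
  refine sum_mem fun ω _ => ?_
  let D : SubgroupConjClasses G := Quotient.mk _ (stabilizer G ω.out)
  have hlt : Nat.card D.out < Nat.card C.out :=
    (card_out_mk _).trans_lt (card_stabilizer_properCosetParts_lt ω.out)
  have hle : S C ≤ S D :=
    hS D C ((subconj_out_mk _).trans (subconj_stabilizer_properCosetParts ω.out))
  rw [← ghostTerm_out_mk]
  exact AddSubgroup.subset_closure <| Set.mem_biUnion hlt <|
    Set.mem_image_of_mem _ (hle (mul_mem (pow_mem ha _) (pow_mem hb _)))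

theorem exists_ghost_add_ghost_eq [Fintype G] {A : Type*} [CommRing A]
    {S : SubgroupConjClasses G → Subring A}
    (hS : ∀ C D : SubgroupConjClasses G, Subconj C.out D.out → S D ≤ S C)
    {x y : SubgroupConjClasses G → A} (hx : ∀ C, x C ∈ S C) (hy : ∀ C, y C ∈ S C) :
    ∃ z : SubgroupConjClasses G → A, (∀ C, z C ∈ S C) ∧
      ∀ U, ghost U x + ghost U y = ghost U z := by
  have term_mem {w : SubgroupConjClasses G → A} (hw : ∀ C, w C ∈ S C) :
      ∑ C, ghostTerm C.out (w C) ∈ AddSubgroup.closure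
        (⋃ C ∈ Finset.univ, ghostTerm C.out '' ((S C).toAddSubgroup : Set A)) :=
    sum_mem fun C hC => AddSubgroup.subset_closure <|
      Set.mem_biUnion hC <| Set.mem_image_of_mem _ (hw C)
  obtain ⟨z, hz, hsum⟩ := exists_sum_eq_of_mem_closure_of_isLowerSet
    (fun C : SubgroupConjClasses G => Nat.card C.out) (fun C => (S C).toAddSubgroup)
    (fun C => ghostTerm C.out) (fun C _ ha _ hb => ghostTerm_add_sub_sub_mem_closure hS C ha hb)
    Finset.univ (fun _ _ _ _ => Finset.mem_univ _) _ (add_mem (term_mem hx) (term_mem hy))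
  refine ⟨z, hz, fun U => ?_⟩
  simpa only [ghost_eq_sum_ghostTerm, Pi.add_apply, Finset.sum_apply] using (congrFun hsum U).symm

theorem exists_rename_ghost_add_ghost_eq [Fintype G] :
    ∃ s : ∀ C : SubgroupConjClasses G, MvPolynomial
        ({D : SubgroupConjClasses G // Subconj C.out D.out} ⊕
         {D : SubgroupConjClasses G // Subconj C.out D.out}) ℤ,
      ∀ U : Subgroup G,
        ghost U (fun C => MvPolynomial.X (R := ℤ) (Sum.inl C)) +
            ghost U (fun C => MvPolynomial.X (Sum.inr C)) =
          ghost U fun C => MvPolynomial.rename (Sum.map Subtype.val Subtype.val) (s C) := by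
  let allowed (C : SubgroupConjClasses G) :
      Set (SubgroupConjClasses G ⊕ SubgroupConjClasses G) :=
    Set.range (Sum.map (Subtype.val (p := fun D => Subconj C.out D.out))
      (Subtype.val (p := fun D => Subconj C.out D.out)))
  have allowed_mono (C D : SubgroupConjClasses G) (h : Subconj C.out D.out) :
      allowed D ⊆ allowed C := by
    rintro _ ⟨E | E, rfl⟩
    exacts [⟨Sum.inl ⟨E, h.trans E.2⟩, rfl⟩, ⟨Sum.inr ⟨E, h.trans E.2⟩, rfl⟩]
  obtain ⟨z, hz, hghost⟩ := exists_ghost_add_ghost_eq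
    (S := fun C => (MvPolynomial.supported ℤ (allowed C)).toSubring)
    (fun C D h => MvPolynomial.supported_mono (allowed_mono C D h))
    (fun C => MvPolynomial.X_mem_supported.2 ⟨Sum.inl ⟨C, Subconj.refl _⟩, rfl⟩)
    (fun C => MvPolynomial.X_mem_supported.2 ⟨Sum.inr ⟨C, Subconj.refl _⟩, rfl⟩)
  choose s hs using fun C => MvPolynomial.exists_rename_eq_of_vars_subset_range (z C) _
    (Sum.map_injective.2 ⟨Subtype.val_injective, Subtype.val_injective⟩)
    (MvPolynomial.mem_supported.1 (hz C))
  exact ⟨s, fun U => (hghost U).trans (congrArg (ghost U) (funext fun C => (hs C).symm))⟩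

end GhostVectors

theorem witt_addition_polynomials_general (G : Type u) [Group G] [Fintype G] :
    ∃ s : ∀ C : SubgroupConjClasses G,
      MvPolynomial
        ({D : SubgroupConjClasses G // Subconj (Quotient.out C) (Quotient.out D)} ⊕
         {D : SubgroupConjClasses G // Subconj (Quotient.out C) (Quotient.out D)}) ℤ,
      ∀ (R : Type v) [CommRing R] (H : Subgroup G) (x y : SubgroupConjClasses G → R),
        ghost H x + ghost H y =
          ghost H (fun C => MvPolynomial.aeval
            (Sum.elim (fun D => x D.1) (fun D => y D.1)) (s C)) := by
  obtain ⟨s, hs⟩ := exists_rename_ghost_add_ghost_eq (G := G)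
  refine ⟨s, fun R _ H x y => ?_⟩
  have specialized := congrArg (MvPolynomial.aeval (R := ℤ) (Sum.elim x y)).toRingHom (hs H)
  simp only [map_add, map_ghost] at specialized
  simp only [AlgHom.toRingHom_eq_coe, RingHom.coe_coe, MvPolynomial.aeval_X,
    MvPolynomial.aeval_rename, Sum.elim_inl, Sum.elim_inr, Sum.elim_comp_map] at specialized
  exact specialized

/-- **Existence of the addition Witt polynomials.**  There is a family `s_U`, indexed
by the conjugacy classes of subgroups `U ≤ G`, of integral polynomials in variables
`a_V`, `b_V` indexed by the conjugacy classes of subgroups `V ≤ G` to which `U` is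
subconjugate (the left summand of the variable type gives the `a`-variables, the
right summand the `b`-variables), such that for every commutative ring `R`, every
subgroup `H ≤ G` and all Witt vectors `x, y ∈ W_G(R)` one has
`φ_H(x) + φ_H(y) = φ_H((s_U(x_V, y_V | U ⪯ V ≤ G))'_{U ≤ G})`. -/
theorem witt_addition_polynomials (G : Type u) [Group G] [Fintype G] :
    ∃ s : ∀ C : SubgroupConjClasses G,
      MvPolynomial
        ({D : SubgroupConjClasses G // Subconj (Quotient.out C) (Quotient.out D)} ⊕
         {D : SubgroupConjClasses G // Subconj (Quotient.out C) (Quotient.out D)}) ℤ,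
      ∀ (R : Type u) [CommRing R] (H : Subgroup G) (x y : SubgroupConjClasses G → R),
        ghost H x + ghost H y =
          ghost H (fun C => MvPolynomial.aeval
            (Sum.elim (fun D => x D.1) (fun D => y D.1)) (s C)) :=
  witt_addition_polynomials_general G
end
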